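/- arXiv:2408.04555 — 2 statements merged into one kernel-verified Lean document; each statement's English description precedes it below -/
import Mathlib

section
/- The (m+1)-th price auction (MPA) satisfies the non-sensitivity property: if v and v' are bid vectors that agree on all buyers except possibly buyer i, buyer i is a winner under v (i.e., i ∈ Top_m(v)), and buyer i is still a winner under v' (i.e., i ∈ Top_m(v')), then the winner sets coincide: Top_m(v') = Top_m(v). Consequently, the allocation of every buyer is unchanged. -/
open scoped NNReal

/-- `MPABeats v j i`: buyer `j`'s pair `(v j, j)` is lexicographically greater than
buyer `i`'s pair `(v i, i)` (ties broken by the index order). -/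
def MPABeats {n : ℕ} (v : Fin n → ℝ≥0) (j i : Fin n) : Prop :=
  v i < v j ∨ (v i = v j ∧ i < j)

open Classical in
/-- The winner set `Top_m(v)` of the `(m+1)`-th price auction: the `min(m, n)` buyers whose
pairs `(v i, i)` are highest in the lexicographic order, i.e. those buyers beaten by
fewer than `m` others. -/
noncomputable def TopM {n : ℕ} (m : ℕ) (v : Fin n → ℝ≥0) : Finset (Fin n) :=
  Finset.univ.filter fun i => (Finset.univ.filter fun j => MPABeats v j i).card < m

/-- Payment of each winner: the highest bid among the non-winners
(`0` if every buyer is a winner). -/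
noncomputable def MPAPayment {n : ℕ} (m : ℕ) (v : Fin n → ℝ≥0) : ℝ≥0 :=
  (Finset.univ \ TopM m v).sup v

/-- Utility of buyer `i` with true per-item value `t` under reported bid vector `v`:
`t` minus her payment if she is a winner, and `0` otherwise. -/
noncomputable def MPAUtility {n : ℕ} (m : ℕ) (v : Fin n → ℝ≥0) (i : Fin n) (t : ℝ≥0) : ℝ :=
  if i ∈ TopM m v then (t : ℝ) - (MPAPayment m v : ℝ) else 0

/-!
Once a winner `i` has taken an item, the other buyers compete among themselves for the remaining
`m - 1` items: a buyer ranked above `i` wins in both auctions, and a buyer ranked below `i` loses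
one rival together with one item. So the winner set is `i` together with the top `m - 1` of the
other buyers, and the latter does not depend on the bid of `i`.
-/

section TopScorers

variable {ι β : Type*} [LinearOrder β] {f g : ι → β} {s : Finset ι} {i j k : ι} {m : ℕ}

/-- The competitors in `s` with a strictly higher score than `k`; `k` itself need not lie in `s`. -/
def outscorers (f : ι → β) (s : Finset ι) (k : ι) : Finset ι :=
  {j ∈ s | f k < f j}

/-- The `m` highest-scoring competitors in `s`, encoded as those outscored by fewer than `m` others.
Scores tied at the cutoff are all admitted, so there can be more than `m` of them unless `f` is
injective on `s`. -/
def topScorers (f : ι → β) (s : Finset ι) (m : ℕ) : Finset ι :=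
  {k ∈ s | (outscorers f s k).card < m}

theorem mem_outscorers : j ∈ outscorers f s k ↔ j ∈ s ∧ f k < f j :=
  Finset.mem_filter

theorem mem_topScorers : k ∈ topScorers f s m ↔ k ∈ s ∧ (outscorers f s k).card < m :=
  Finset.mem_filter

theorem card_outscorers_lt (hk : k ∈ s) (hik : f i < f k) :
    (outscorers f s k).card < (outscorers f s i).card := by
  refine Finset.card_lt_card (Finset.ssubset_iff_of_subset ?_ |>.mpr ⟨k, ?_, ?_⟩)
  · exact Finset.monotone_filter_right s fun _ _ hj => hik.trans hj
  · exact mem_outscorers.mpr ⟨hk, hik⟩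
  · exact fun h => lt_irrefl _ (mem_outscorers.mp h).2

theorem topScorers_congr (h : Set.EqOn f g s) : topScorers f s m = topScorers g s m := by
  refine Finset.filter_congr fun k hk => ?_
  have outscorers_eq : outscorers f s k = outscorers g s k :=
    Finset.filter_congr fun j hj => by rw [h hk, h hj]
  rw [outscorers_eq]

section Erase

variable [DecidableEq ι]

theorem outscorers_erase : outscorers f (s.erase i) k = (outscorers f s k).erase i :=
  Finset.filter_erase _ i s

theorem card_outscorers_erase_lt_iff (hk : k ∈ s) (hne : f k ≠ f i) (hi : i ∈ topScorers f s m) :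
    (outscorers f (s.erase i) k).card < m - 1 ↔ (outscorers f s k).card < m := by
  obtain ⟨his, him⟩ := mem_topScorers.mp hi
  rw [outscorers_erase]
  rcases hne.lt_or_gt with hki | hik
  · have i_outscores : i ∈ outscorers f s k := mem_outscorers.mpr ⟨his, hki⟩
    have card_erase := Finset.card_erase_add_one i_outscores
    omega
  · have i_not_outscores : i ∉ outscorers f s k := fun h => hik.asymm (mem_outscorers.mp h).2
    have card_lt := card_outscorers_lt hk hik
    rw [Finset.erase_eq_of_notMem i_not_outscores]
    omega

theorem topScorers_eq_insert_erase (hf : Set.InjOn f s) (hi : i ∈ topScorers f s m) :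
    topScorers f s m = insert i (topScorers f (s.erase i) (m - 1)) := by
  ext k
  obtain rfl | hki := eq_or_ne k i
  · simp only [hi, Finset.mem_insert_self]
  · simp only [Finset.mem_insert, mem_topScorers, Finset.mem_erase, hki, ne_eq, not_false_eq_true,
      true_and, false_or]
    refine and_congr_right fun hk => (card_outscorers_erase_lt_iff hk ?_ hi).symm
    exact hf.ne hk (mem_topScorers.mp hi).1 hki

end Erase

theorem MPA_nonSensitive_general (hf : Set.InjOn f s) (hg : Set.InjOn g s)
    (hagree : ∀ j ∈ s, j ≠ i → g j = f j)
    (hi : i ∈ topScorers f s m) (hi' : i ∈ topScorers g s m) :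
    topScorers g s m = topScorers f s m := by
  classical
  have eqOn_erase : Set.EqOn g f (s.erase i) := fun j hj =>
    hagree j (Finset.mem_of_mem_erase hj) (Finset.ne_of_mem_erase hj)
  rw [topScorers_eq_insert_erase hg hi', topScorers_eq_insert_erase hf hi,
    topScorers_congr eqOn_erase]

end TopScorers

section BidKey

variable {n : ℕ}

/-- The pair `(v i, i)`, in the lexicographic order, by which the auction ranks buyer `i`. -/
def bidKey (v : Fin n → ℝ≥0) (i : Fin n) : ℝ≥0 ×ₗ Fin n :=
  toLex (v i, i)

theorem bidKey_injective (v : Fin n → ℝ≥0) : Function.Injective (bidKey v) :=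
  fun _ _ h => congrArg (fun p => (ofLex p).2) h

theorem bidKey_lt_bidKey_iff {v : Fin n → ℝ≥0} {i j : Fin n} :
    bidKey v i < bidKey v j ↔ MPABeats v j i :=
  Prod.Lex.toLex_lt_toLex

theorem topM_eq_topScorers (m : ℕ) (v : Fin n → ℝ≥0) :
    TopM m v = topScorers (bidKey v) Finset.univ m := by
  simp only [TopM, ← bidKey_lt_bidKey_iff, topScorers, outscorers]
  -- `TopM` filters with classical decidability, `topScorers` with that of the linear order.
  congr!

end BidKey

/-- The `(m+1)`-th price auction satisfies the non-sensitivity property: if `v` and `v'`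
are bid vectors agreeing on all buyers except possibly buyer `i`, buyer `i` is a winner
under `v`, and buyer `i` is still a winner under `v'`, then the winner sets coincide
(hence the allocation of every buyer is unchanged). -/
theorem MPA_nonSensitive {n m : ℕ} (hm : 1 ≤ m) (v v' : Fin n → ℝ≥0) (i : Fin n)
    (hagree : ∀ j : Fin n, j ≠ i → v' j = v j)
    (hi : i ∈ TopM m v) (hi' : i ∈ TopM m v') :
    TopM m v' = TopM m v := by
  simp only [topM_eq_topScorers] at hi hi' ⊢
  exact MPA_nonSensitive_general (bidKey_injective v).injOn (bidKey_injective v').injOn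
    (fun j _ hj => by simp only [bidKey, hagree j hj]) hi hi'
end

section
/- In the LOS greedy mechanism for single-minded buyers, winning is monotone in one's own bid: if b and b' are bid profiles that agree on all buyers except buyer i, with b'_i ≥ b_i, and buyer i is a winner under b (i.e., i ∈ W(b)), then buyer i is also a winner under b' (i.e., i ∈ W(b')). -/
open scoped NNReal

/-- Average valuation of (single-minded) buyer `i`: her bid for her demanded bundle
divided by the number of items in the bundle. -/
noncomputable def avgVal {n m : ℕ} (d : Fin n → Finset (Fin m)) (b : Fin n → ℝ≥0)
    (i : Fin n) : ℝ≥0 :=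
  b i / ((d i).card : ℝ≥0)

/-- `procBefore d b i j`: buyer `i` is processed no later than buyer `j`, i.e. the pair
`(av i, i)` is lexicographically no smaller than `(av j, j)` (buyers are processed in
decreasing lexicographic order of these pairs, ties broken by the index order). -/
noncomputable def procBefore {n m : ℕ} (d : Fin n → Finset (Fin m)) (b : Fin n → ℝ≥0)
    (i j : Fin n) : Prop :=
  toLex (avgVal d b j, j) ≤ toLex (avgVal d b i, i)

open Classical in
/-- The processing order of the LOS mechanism: all buyers, listed in decreasing
lexicographic order of the pairs `(av i, i)`. -/
noncomputable def procList {n m : ℕ} (d : Fin n → Finset (Fin m)) (b : Fin n → ℝ≥0) :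
    List (Fin n) :=
  List.insertionSort (procBefore d b) (List.finRange n)

/-- One step of the LOS greedy allocation: buyer `i` is added to the current winner set
`W` iff her demanded bundle is disjoint from the bundles of all earlier winners. -/
def greedyStep {n m : ℕ} (d : Fin n → Finset (Fin m)) (W : Finset (Fin n)) (i : Fin n) :
    Finset (Fin n) :=
  if Disjoint (d i) (W.biUnion d) then insert i W else W

/-- `LOSWinners d b`: the winner set `W(b)` of the LOS greedy mechanism, obtained by
processing the buyers in decreasing order of average valuation (ties broken by index). -/
noncomputable def LOSWinners {n m : ℕ} (d : Fin n → Finset (Fin m)) (b : Fin n → ℝ≥0) :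
    Finset (Fin n) :=
  (procList d b).foldl (greedyStep d) ∅

/-!
Removing buyer `i` from the processing order leaves a list of rivals that does not depend on her
own bid, and she wins iff her bundle is disjoint from those won by the greedy run over the rivals
that precede her. Raising her bid shortens this list to a prefix of itself; since the greedy winner
set only grows along the run, no further items are taken when her turn comes.
-/

theorem takeWhile_prefix_takeWhile_of_imp {α : Type*} {p q : α → Bool} {l : List α}
    (h : ∀ a ∈ l, p a → q a) : l.takeWhile p <+: l.takeWhile q := by
  induction l with
  | nil => rfl
  | cons a l ih => grind [List.takeWhile_cons]

section Greedy

variable {n m : ℕ} {d : Fin n → Finset (Fin m)} {W : Finset (Fin n)} {i j : Fin n}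
  {l l' : List (Fin n)}

theorem mem_greedyStep :
    j ∈ greedyStep d W i ↔ j ∈ W ∨ j = i ∧ Disjoint (d i) (W.biUnion d) := by
  unfold greedyStep
  split_ifs with h <;> simp [h, or_comm]

theorem subset_foldl_greedyStep (d : Fin n → Finset (Fin m)) (W : Finset (Fin n))
    (l : List (Fin n)) : W ⊆ l.foldl (greedyStep d) W := by
  induction l generalizing W with
  | nil => rfl
  | cons k _ ih => exact fun j hj => ih _ (mem_greedyStep.2 (.inl hj))

theorem foldl_greedyStep_subset_of_prefix (d : Fin n → Finset (Fin m)) (W : Finset (Fin n))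
    (h : l' <+: l) : l'.foldl (greedyStep d) W ⊆ l.foldl (greedyStep d) W := by
  obtain ⟨t, rfl⟩ := h
  rw [List.foldl_append]
  exact subset_foldl_greedyStep d _ t

theorem mem_foldl_greedyStep_of_notMem (hi : i ∉ l) :
    i ∈ l.foldl (greedyStep d) W ↔ i ∈ W := by
  induction l generalizing W with
  | nil => rfl
  | cons k l ih =>
    rw [List.mem_cons, not_or] at hi
    rw [List.foldl_cons, ih hi.2, mem_greedyStep]
    simp only [hi.1, false_and, or_false]

theorem mem_foldl_greedyStep_append_cons (hW : i ∉ W) (hl : i ∉ l) (hl' : i ∉ l') :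
    i ∈ (l ++ i :: l').foldl (greedyStep d) W ↔
      Disjoint (d i) ((l.foldl (greedyStep d) W).biUnion d) := by
  rw [List.foldl_append, List.foldl_cons, mem_foldl_greedyStep_of_notMem hl', mem_greedyStep,
    mem_foldl_greedyStep_of_notMem hl]
  simp only [hW, true_and, false_or]

end Greedy

section ProcessingOrder

variable {n m : ℕ} {d : Fin n → Finset (Fin m)} {b b' : Fin n → ℝ≥0} {i j : Fin n}

instance procBefore.total : Std.Total (procBefore d b) :=
  ⟨fun _ _ => le_total _ _⟩

instance procBefore.isTrans : IsTrans (Fin n) (procBefore d b) :=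
  ⟨fun _ _ _ hij hjk => le_trans hjk hij⟩

instance procBefore.antisymm : Std.Antisymm (procBefore d b) :=
  ⟨fun _ _ hij hji => congrArg (fun p => (ofLex p).2) (le_antisymm hji hij)⟩

theorem avgVal_mono (h : b i ≤ b' i) : avgVal d b i ≤ avgVal d b' i := by
  unfold avgVal
  gcongr

theorem procBefore_mono (hi : b i ≤ b' i) (hj : b' j ≤ b j) (h : procBefore d b i j) :
    procBefore d b' i j :=
  calc toLex (avgVal d b' j, j)
    _ ≤ toLex (avgVal d b j, j) := Prod.Lex.toLex_mono ⟨avgVal_mono hj, le_rfl⟩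
    _ ≤ toLex (avgVal d b i, i) := h
    _ ≤ toLex (avgVal d b' i, i) := Prod.Lex.toLex_mono ⟨avgVal_mono hi, le_rfl⟩

theorem procBefore_congr (hi : b' i = b i) (hj : b' j = b j) :
    procBefore d b' i j ↔ procBefore d b i j :=
  ⟨procBefore_mono hi.le hj.ge, procBefore_mono hi.ge hj.le⟩

end ProcessingOrder

section Rivals

open scoped List

variable {n m : ℕ} {d : Fin n → Finset (Fin m)} {b b' : Fin n → ℝ≥0} {i j : Fin n}

open Classical in
/-- The rivals of buyer `i`, i.e. all other buyers, in processing order. -/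
noncomputable def rivals (d : Fin n → Finset (Fin m)) (b : Fin n → ℝ≥0) (i : Fin n) :
    List (Fin n) :=
  ((List.finRange n).erase i).insertionSort (procBefore d b)

open Classical in
/-- The rivals of buyer `i` processed before her, in processing order. It is defined as an initial
segment of `rivals d b i`, so that lists for different bids of `i` can be compared by `<+:`. -/
noncomputable def rivalsBefore (d : Fin n → Finset (Fin m)) (b : Fin n → ℝ≥0) (i : Fin n) :
    List (Fin n) :=
  (rivals d b i).takeWhile fun j => ¬ procBefore d b i j

theorem mem_rivals : j ∈ rivals d b i ↔ j ≠ i := by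
  simp only [rivals, List.mem_insertionSort, (List.nodup_finRange n).mem_erase_iff,
    List.mem_finRange, and_true]

theorem rivals_congr (h : ∀ j, j ≠ i → b' j = b j) : rivals d b' i = rivals d b i := by
  classical
  have agree_on_rivals : ∀ j ∈ (List.finRange n).erase i, ∀ k ∈ (List.finRange n).erase i,
      procBefore d b' j k ↔ procBefore d b j k := fun j hj k hk =>
    procBefore_congr (h j ((List.nodup_finRange n).mem_erase_iff.1 hj).1)
      (h k ((List.nodup_finRange n).mem_erase_iff.1 hk).1)
  simpa only [List.map_id, rivals] using List.map_insertionSort _ _ id _ agree_on_rivals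

open Classical in
theorem procList_eq_orderedInsert_rivals (d : Fin n → Finset (Fin m)) (b : Fin n → ℝ≥0)
    (i : Fin n) :
    procList d b = (rivals d b i).orderedInsert (procBefore d b) i := by
  have perm : procList d b ~ (rivals d b i).orderedInsert (procBefore d b) i :=
    calc procList d b
      _ ~ List.finRange n := List.perm_insertionSort _ _
      _ ~ i :: (List.finRange n).erase i := List.perm_cons_erase (List.mem_finRange i)
      _ ~ i :: rivals d b i := (List.perm_insertionSort _ _).symm.cons i
      _ ~ (rivals d b i).orderedInsert (procBefore d b) i := (List.perm_orderedInsert _ _ _).symm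
  exact perm.eq_of_pairwise' (List.pairwise_insertionSort _ _)
    ((List.pairwise_insertionSort _ _).orderedInsert i _)

theorem mem_LOSWinners_iff :
    i ∈ LOSWinners d b ↔
      Disjoint (d i) (((rivalsBefore d b i).foldl (greedyStep d) ∅).biUnion d) := by
  classical
  have hi : i ∉ rivals d b i := fun h => mem_rivals.1 h rfl
  rw [LOSWinners, procList_eq_orderedInsert_rivals d b i, List.orderedInsert_eq_take_drop]
  exact mem_foldl_greedyStep_append_cons (Finset.notMem_empty i)
    (fun h => hi (List.takeWhile_subset _ h)) (fun h => hi (List.dropWhile_subset _ h))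

theorem rivalsBefore_prefix_of_le (hagree : ∀ j, j ≠ i → b' j = b j) (hge : b i ≤ b' i) :
    rivalsBefore d b' i <+: rivalsBefore d b i := by
  unfold rivalsBefore
  rw [rivals_congr hagree]
  refine takeWhile_prefix_takeWhile_of_imp fun j hj => ?_
  have hj_bid : b' j = b j := hagree j (mem_rivals.1 hj)
  simpa only [decide_eq_true_eq] using mt (procBefore_mono hge hj_bid.le)

end Rivals

/-- In the LOS greedy mechanism for single-minded buyers, winning is monotone in one's
own bid: if `b` and `b'` agree on all buyers except buyer `i`, with `b' i ≥ b i`, and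
buyer `i` is a winner under `b`, then buyer `i` is also a winner under `b'`. -/
theorem LOS_winning_monotone {n m : ℕ} (d : Fin n → Finset (Fin m))
    (hd : ∀ i, (d i).Nonempty) (b b' : Fin n → ℝ≥0) (i : Fin n)
    (hagree : ∀ j : Fin n, j ≠ i → b' j = b j) (hge : b i ≤ b' i)
    (hw : i ∈ LOSWinners d b) : i ∈ LOSWinners d b' := by
  rw [mem_LOSWinners_iff] at hw ⊢
  have taken_subset : ((rivalsBefore d b' i).foldl (greedyStep d) ∅).biUnion d ⊆
      ((rivalsBefore d b i).foldl (greedyStep d) ∅).biUnion d :=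
    Finset.biUnion_subset_biUnion_of_subset_left d <|
      foldl_greedyStep_subset_of_prefix d ∅ (rivalsBefore_prefix_of_le hagree hge)
  exact hw.mono_right taken_subset
end
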